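/- (Proposition 3.7 (ii), uniform finite-field form) Let p be a prime number and Σ a finite set of prime numbers. Then there exists a constant Q such that for every finite field F of characteristic p with #F > Q and all c, d ∈ F^×, there exist a, b ∈ F^× of Σ'-primary order with c = a + b·d. -/

import Mathlib

/-- A torsion element of a monoid whose (finite) order has all of its prime divisors
outside `S`; for `S' = Primes ∖ S` this says the element has `S'`-primary order. -/
def PrimaryOutside (S : Set ℕ) {M : Type*} [Monoid M] (x : M) : Prop :=
  IsOfFinOrder x ∧ ∀ ℓ : ℕ, ℓ.Prime → ℓ ∣ orderOf x → ℓ ∉ S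

/-!
Put `q = #F` and let `N` be the `S`-part of `q - 1`. The `N`-th powers form a subgroup `H` of `Fˣ`
of order `(q - 1) / N`, and all its elements have order prime to `S`, so it suffices to solve
`c = a + b * d` in `H`. Instead of the Weil bound for twisted Fermat curves, we use Vinh's bound on
the number of incidences between points and lines in `F²`. It implies that `x * y + z = w` is
solvable in `A × B × C × D` as soon as `#A * #B * #C * #D > q ^ 3`. Solving `x * y + z = w` in
`dH × H × H × cH` and dividing by the `H`-component of `w` gives the required `a` and `b`. The
condition `#H ^ 4 > q ^ 3` holds for large `q = p ^ m`, because lifting the exponent gives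
`N ≤ C * m`.
-/

open Filter Finset
open scoped Pointwise

section Incidence

variable {F : Type*} [Field F] [DecidableEq F]

/-- The number of lines of `L` through the point `P` of the affine plane, where `(m, b)` encodes
the line `y = m * x + b`. -/
def lineCount (L : Finset (F × F)) (P : F × F) : ℕ :=
  #{l ∈ L | l.1 * P.1 + l.2 = P.2}

lemma lineCount_sq (L : Finset (F × F)) (P : F × F) :
    lineCount L P ^ 2 =
      #{l ∈ L ×ˢ L | l.1.1 * P.1 + l.1.2 = P.2 ∧ l.2.1 * P.1 + l.2.2 = P.2} := by
  rw [sq, lineCount, ← card_product, ← filter_product]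

variable [Fintype F]

lemma card_points_on_line (l : F × F) :
    #{P : F × F | l.1 * P.1 + l.2 = P.2} = Fintype.card F := by
  have h : ({P : F × F | l.1 * P.1 + l.2 = P.2} : Finset (F × F)) =
      univ.image fun x ↦ (x, l.1 * x + l.2) := by
    ext ⟨x, y⟩
    simp
  rw [h, card_image_of_injective _ fun x y hxy ↦ congrArg Prod.fst hxy, card_univ]

lemma card_points_on_two_lines_le_one {l l' : F × F} (hl : l ≠ l') :
    #{P : F × F | l.1 * P.1 + l.2 = P.2 ∧ l'.1 * P.1 + l'.2 = P.2} ≤ 1 := by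
  obtain ⟨m, b⟩ := l
  obtain ⟨m', b'⟩ := l'
  rw [card_le_one]
  rintro ⟨x, y⟩ hP ⟨x', y'⟩ hP'
  simp only [mem_filter, mem_univ, true_and] at hP hP'
  have slope_ne : m - m' ≠ 0 := by
    rw [sub_ne_zero]
    rintro rfl
    exact hl (Prod.ext rfl (add_left_cancel (hP.1.trans hP.2.symm)))
  have hx : x = x' := mul_left_cancel₀ slope_ne <| by
    linear_combination hP.1 - hP.2 - hP'.1 + hP'.2
  subst hx
  exact Prod.ext rfl (hP.1.symm.trans hP'.1)

lemma sum_lineCount (L : Finset (F × F)) : ∑ P, lineCount L P = #L * Fintype.card F := by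
  calc ∑ P, lineCount L P = ∑ l ∈ L, #{P : F × F | l.1 * P.1 + l.2 = P.2} :=
        sum_card_bipartiteAbove_eq_sum_card_bipartiteBelow fun P l : F × F ↦ l.1 * P.1 + l.2 = P.2
    _ = #L * Fintype.card F := by simp only [card_points_on_line, sum_const, smul_eq_mul]

lemma sum_lineCount_sq_le (L : Finset (F × F)) :
    ∑ P, lineCount L P ^ 2 ≤ #L * Fintype.card F + #L ^ 2 := by
  calc ∑ P, lineCount L P ^ 2
      = ∑ l ∈ L ×ˢ L,
          #{P : F × F | l.1.1 * P.1 + l.1.2 = P.2 ∧ l.2.1 * P.1 + l.2.2 = P.2} := by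
        simp only [lineCount_sq]
        exact sum_card_bipartiteAbove_eq_sum_card_bipartiteBelow
          fun (P : F × F) (l : (F × F) × (F × F)) ↦
            l.1.1 * P.1 + l.1.2 = P.2 ∧ l.2.1 * P.1 + l.2.2 = P.2
    _ ≤ ∑ l ∈ L ×ˢ L, ((if l.1 = l.2 then Fintype.card F else 0) + 1) := by
        refine sum_le_sum fun l _ ↦ ?_
        split_ifs with hl
        · simp only [hl, and_self, card_points_on_line, Nat.le_add_right]
        · simpa only [zero_add] using card_points_on_two_lines_le_one hl
    _ = #L * Fintype.card F + #L ^ 2 := by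
        simp [sum_add_distrib, sum_product, sq]

lemma sum_lineCount_deviation_sq_le (L : Finset (F × F)) :
    ∑ P, ((Fintype.card F : ℤ) * lineCount L P - #L) ^ 2 ≤ (Fintype.card F : ℤ) ^ 3 * #L := by
  set q : ℤ := (Fintype.card F : ℤ) with hq
  have first_moment : ∑ P, (lineCount L P : ℤ) = #L * q := by
    rw [hq]
    exact_mod_cast sum_lineCount L
  have second_moment : ∑ P, (lineCount L P : ℤ) ^ 2 ≤ #L * q + (#L : ℤ) ^ 2 := by
    rw [hq]
    exact_mod_cast sum_lineCount_sq_le L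
  have card_plane : ∑ _P : F × F, (#L : ℤ) ^ 2 = q ^ 2 * (#L : ℤ) ^ 2 := by
    simp [hq, sq]
  calc ∑ P, (q * lineCount L P - #L) ^ 2
      = q ^ 2 * ∑ P, (lineCount L P : ℤ) ^ 2 - 2 * q * #L * ∑ P, (lineCount L P : ℤ)
          + ∑ _P : F × F, (#L : ℤ) ^ 2 := by
        rw [mul_sum, mul_sum, ← sum_sub_distrib, ← sum_add_distrib]
        exact sum_congr rfl fun P _ ↦ by ring
    _ ≤ q ^ 2 * (#L * q + (#L : ℤ) ^ 2) - 2 * q * #L * (#L * q) + q ^ 2 * (#L : ℤ) ^ 2 := by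
        rw [first_moment, card_plane]
        gcongr
    _ = q ^ 3 * #L := by ring

/-- Vinh's incidence bound: Cauchy–Schwarz reduces it to the variance of `lineCount L` over the
whole plane. -/
theorem sq_card_mul_incidences_sub_le (P L : Finset (F × F)) :
    ((Fintype.card F : ℤ) * ∑ x ∈ P, (lineCount L x : ℤ) - #P * #L) ^ 2 ≤
      (Fintype.card F : ℤ) ^ 3 * (#P * #L) := by
  set q : ℤ := (Fintype.card F : ℤ)
  calc (q * ∑ x ∈ P, (lineCount L x : ℤ) - #P * #L) ^ 2
      = (∑ x ∈ P, (q * lineCount L x - #L)) ^ 2 := by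
        rw [sum_sub_distrib, ← mul_sum, sum_const, nsmul_eq_mul]
    _ ≤ #P * ∑ x ∈ P, (q * lineCount L x - #L) ^ 2 := sq_sum_le_card_mul_sum_sq
    _ ≤ #P * ∑ x, (q * lineCount L x - #L) ^ 2 := by
        gcongr
        exact subset_univ P
    _ ≤ #P * (q ^ 3 * #L) := by
        gcongr
        exact sum_lineCount_deviation_sq_le L
    _ = q ^ 3 * (#P * #L) := by ring

end Incidence

section Solvability

variable {F : Type*} [Field F] [Fintype F]

theorem exists_incidence_of_card_pow_three_lt {P L : Finset (F × F)}
    (h : Fintype.card F ^ 3 < #P * #L) : ∃ x ∈ P, ∃ l ∈ L, l.1 * x.1 + l.2 = x.2 := by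
  classical
  by_contra! no_incidence
  have hzero : ∀ x ∈ P, (lineCount L x : ℤ) = 0 := fun x hx ↦
    mod_cast card_eq_zero.2 (filter_eq_empty_iff.2 fun l hl ↦ no_incidence x hx l hl)
  have hbound : ((#P * #L : ℕ) : ℤ) ^ 2 ≤ (Fintype.card F ^ 3 * (#P * #L) : ℕ) := by
    simpa [sum_eq_zero hzero] using sq_card_mul_incidences_sub_le P L
  have hle : (#P * #L) * (#P * #L) ≤ Fintype.card F ^ 3 * (#P * #L) := by
    rw [← sq]
    exact_mod_cast hbound
  exact h.not_ge (Nat.le_of_mul_le_mul_right hle (Nat.zero_lt_of_lt h))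

theorem exists_mul_add_eq_of_card_pow_three_lt {A B C D : Finset F}
    (h : Fintype.card F ^ 3 < #A * #B * #C * #D) :
    ∃ x ∈ A, ∃ y ∈ B, ∃ z ∈ C, ∃ w ∈ D, x * y + z = w := by
  have hcard : Fintype.card F ^ 3 < #(B ×ˢ D) * #(A ×ˢ C) := by
    rw [card_product, card_product]
    linarith
  obtain ⟨⟨y, w⟩, hyw, ⟨x, z⟩, hxz, hxyzw⟩ := exists_incidence_of_card_pow_three_lt hcard
  rw [mem_product] at hyw hxz
  exact ⟨x, hxz.1, y, hyw.1, z, hxz.2, w, hyw.2, hxyzw⟩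

theorem exists_mem_subgroup_eq_add_mul {H : Subgroup Fˣ}
    (hH : Fintype.card F ^ 3 < Nat.card H ^ 4) {c d : F} (hc : c ≠ 0) (hd : d ≠ 0) :
    ∃ a ∈ H, ∃ b ∈ H, c = a + b * d := by
  classical
  obtain ⟨K, mem_K, card_K⟩ :
      ∃ K : Finset F, (∀ x ∈ K, ∃ u ∈ H, (u : F) = x) ∧ #K = Nat.card H := by
    refine ⟨univ.image fun u : H ↦ ((u : Fˣ) : F), by simp, ?_⟩
    rw [card_image_of_injective _ fun u v h ↦ Subtype.ext (Units.ext h), card_univ,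
      Nat.card_eq_fintype_card]
  have hcard : Fintype.card F ^ 3 < #(d • K) * #K * #K * #(c • K) := by
    rw [card_smul_finset₀ hd, card_smul_finset₀ hc, card_K]
    exact hH.trans_eq (by ring)
  obtain ⟨_, hdx, _, hy, _, hz, _, hcw, hxyzw⟩ := exists_mul_add_eq_of_card_pow_three_lt hcard
  obtain ⟨_, hx, rfl⟩ := mem_smul_finset.1 hdx
  obtain ⟨_, hw, rfl⟩ := mem_smul_finset.1 hcw
  obtain ⟨x, hxH, rfl⟩ := mem_K _ hx
  obtain ⟨y, hyH, rfl⟩ := mem_K _ hy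
  obtain ⟨z, hzH, rfl⟩ := mem_K _ hz
  obtain ⟨w, hwH, rfl⟩ := mem_K _ hw
  refine ⟨z / w, div_mem hzH hwH, x * y / w, div_mem (mul_mem hxH hyH) hwH, ?_⟩
  simp only [smul_eq_mul] at hxyzw
  simp only [Units.val_div_eq_div_val, Units.val_mul]
  field_simp
  linear_combination -hxyzw

end Solvability

section PrimaryPart

/-- The `S`-part of `n`: for `n ≠ 0`, the largest divisor of `n` all of whose prime factors lie
in `S`. Since `n.factorization` vanishes off the primes, non-primes in `S` contribute `1`. -/
def primaryPart (S : Finset ℕ) (n : ℕ) : ℕ :=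
  ∏ ℓ ∈ S, ordProj[ℓ] n

variable (S : Finset ℕ)

lemma primaryPart_dvd {n : ℕ} (hn : n ≠ 0) : primaryPart S n ∣ n := by
  have hsupport : ∏ ℓ ∈ S ∩ n.factorization.support, ordProj[ℓ] n = primaryPart S n :=
    prod_subset inter_subset_left fun ℓ hℓ hℓ' ↦ by
      rw [Finsupp.notMem_support_iff.1 fun h ↦ hℓ' (mem_inter.2 ⟨hℓ, h⟩), pow_zero]
  calc primaryPart S n = ∏ ℓ ∈ S ∩ n.factorization.support, ordProj[ℓ] n := hsupport.symm
    _ ∣ ∏ ℓ ∈ n.factorization.support, ordProj[ℓ] n :=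
        prod_dvd_prod_of_subset _ _ _ inter_subset_right
    _ = n := Nat.prod_factorization_pow_eq_self hn

lemma not_dvd_div_primaryPart {n ℓ : ℕ} (hn : n ≠ 0) (hℓ : ℓ.Prime) (hℓS : ℓ ∈ S) :
    ¬ ℓ ∣ n / primaryPart S n := by
  intro h
  refine Nat.not_dvd_ordCompl hℓ hn (h.trans ?_)
  exact Nat.div_dvd_div_left (primaryPart_dvd S hn) (dvd_prod_of_mem (fun ℓ ↦ ordProj[ℓ] n) hℓS)

end PrimaryPart

section PrimaryPartGrowth

lemma factorization_two_pow_sub_one_le {a m : ℕ} (ha : 1 < a) (hodd : ¬ 2 ∣ a) (hm : m ≠ 0) :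
    (a ^ m - 1).factorization 2 ≤
      (a + 1).factorization 2 + (a - 1).factorization 2 + m.factorization 2 := by
  have hm' : m * 2 ≠ 0 := by lia
  have hne : a ^ (m * 2) - 1 ≠ 0 := Nat.sub_ne_zero_of_lt (Nat.one_lt_pow hm' ha)
  have hdvd : a ^ m - 1 ∣ a ^ (m * 2) - 1 :=
    Nat.pow_sub_one_dvd_pow_sub_one a (dvd_mul_right m 2)
  have hle : (a ^ m - 1).factorization 2 ≤ (a ^ (m * 2) - 1).factorization 2 :=
    (Nat.factorization_le_iff_dvd (ne_zero_of_dvd_ne_zero hne hdvd) hne).2 hdvd 2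
  have hlte := padicValNat.pow_two_sub_one ha hodd hm' (Nat.even_mul.2 (.inr even_two))
  rw [padicValNat.mul hm two_ne_zero, padicValNat_self] at hlte
  simp only [← Nat.factorization_def _ Nat.prime_two] at hlte
  lia

lemma factorization_pow_sub_one_le_of_odd {a ℓ m : ℕ} (ha : 1 < a) (hℓ : ℓ.Prime) (hodd : Odd ℓ)
    (hℓa : ¬ ℓ ∣ a) (hm : m ≠ 0) :
    (a ^ m - 1).factorization ℓ ≤
      (a ^ (ℓ - 1) - 1).factorization ℓ + m.factorization ℓ := by
  have := Fact.mk hℓ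
  have hb : 1 < a ^ (ℓ - 1) := Nat.one_lt_pow hℓ.pred_pos.ne' ha
  have hne : (a ^ (ℓ - 1)) ^ m - 1 ≠ 0 := Nat.sub_ne_zero_of_lt (Nat.one_lt_pow hm hb)
  have hdvd : a ^ m - 1 ∣ (a ^ (ℓ - 1)) ^ m - 1 := by
    rw [← pow_mul]
    exact Nat.pow_sub_one_dvd_pow_sub_one a (dvd_mul_left m (ℓ - 1))
  have fermat : ℓ ∣ a ^ (ℓ - 1) - 1 := by
    have h := Nat.ModEq.pow_totient (hℓ.coprime_iff_not_dvd.2 hℓa).symm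
    rw [Nat.totient_prime hℓ] at h
    exact (Nat.modEq_iff_dvd' hb.le).1 h.symm
  have hlte := padicValNat.pow_sub_pow hodd hb fermat (mt hℓ.dvd_of_dvd_pow hℓa) hm
  simp only [one_pow, ← Nat.factorization_def _ hℓ] at hlte
  exact hlte ▸ (Nat.factorization_le_iff_dvd (ne_zero_of_dvd_ne_zero hne hdvd) hne).2 hdvd ℓ

lemma exists_factorization_pow_sub_one_le {a ℓ : ℕ} (ha : 1 < a) (hℓ : ℓ.Prime) :
    ∃ e, ∀ m ≠ 0, (a ^ m - 1).factorization ℓ ≤ e + m.factorization ℓ := by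
  by_cases hℓa : ℓ ∣ a
  · refine ⟨0, fun m hm ↦ ?_⟩
    have hndvd : ¬ ℓ ∣ a ^ m - 1 := fun h ↦ hℓ.not_dvd_one <|
      (Nat.dvd_sub_iff_right (Nat.one_le_pow _ _ ha.le) (dvd_pow hℓa hm)).1 h
    simp only [Nat.factorization_eq_zero_of_not_dvd hndvd, zero_le]
  · obtain rfl | hodd := hℓ.eq_two_or_odd'
    · exact ⟨_, fun m hm ↦ factorization_two_pow_sub_one_le ha hℓa hm⟩
    · exact ⟨_, fun m hm ↦ factorization_pow_sub_one_le_of_odd ha hℓ hodd hℓa hm⟩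

lemma exists_ordProj_pow_sub_one_le {a : ℕ} (ha : 1 < a) (ℓ : ℕ) :
    ∃ C, ∀ m ≠ 0, ordProj[ℓ] (a ^ m - 1) ≤ C * ordProj[ℓ] m := by
  by_cases hℓ : ℓ.Prime
  · obtain ⟨e, he⟩ := exists_factorization_pow_sub_one_le ha hℓ
    refine ⟨ℓ ^ e, fun m hm ↦ ?_⟩
    rw [← pow_add]
    exact Nat.pow_le_pow_right hℓ.pos (he m hm)
  · exact ⟨1, fun m _ ↦ by simp only [Nat.ordProj_of_not_prime _ _ hℓ, mul_one, le_refl]⟩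

variable (S : Finset ℕ)

theorem exists_primaryPart_pow_sub_one_le {a : ℕ} (ha : 1 < a) :
    ∃ C, ∀ m ≠ 0, primaryPart S (a ^ m - 1) ≤ C * m := by
  choose C hC using exists_ordProj_pow_sub_one_le ha
  refine ⟨∏ ℓ ∈ S, C ℓ, fun m hm ↦ ?_⟩
  calc primaryPart S (a ^ m - 1) ≤ ∏ ℓ ∈ S, (C ℓ * ordProj[ℓ] m) :=
        prod_le_prod' fun ℓ _ ↦ hC ℓ m hm
    _ = (∏ ℓ ∈ S, C ℓ) * primaryPart S m := prod_mul_distrib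
    _ ≤ (∏ ℓ ∈ S, C ℓ) * m :=
        Nat.mul_le_mul_left _ (Nat.le_of_dvd (Nat.pos_of_ne_zero hm) (primaryPart_dvd S hm))

lemma eventually_mul_pow_lt_pow {a : ℕ} (ha : 1 < a) (C k : ℕ) :
    ∀ᶠ m in atTop, C * m ^ k < a ^ m := by
  have hlim : Tendsto (fun m : ℕ ↦ (C : ℝ) * ((m : ℝ) ^ k / (a : ℝ) ^ m)) atTop (nhds 0) := by
    simpa only [mul_zero] using
      (tendsto_pow_const_div_const_pow_of_one_lt k (Nat.one_lt_cast.2 ha)).const_mul (C : ℝ)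
  filter_upwards [hlim.eventually_lt_const one_pos] with m hm
  rw [← mul_div_assoc, div_lt_one (by positivity)] at hm
  exact_mod_cast hm

theorem eventually_mul_primaryPart_pow_lt_pow {a : ℕ} (ha : 1 < a) (C k : ℕ) :
    ∀ᶠ m in atTop, C * primaryPart S (a ^ m - 1) ^ k < a ^ m := by
  obtain ⟨D, hD⟩ := exists_primaryPart_pow_sub_one_le S ha
  filter_upwards [eventually_mul_pow_lt_pow ha (C * D ^ k) k, eventually_ne_atTop 0] with m hm hm0
  calc C * primaryPart S (a ^ m - 1) ^ k ≤ C * (D * m) ^ k := by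
        gcongr
        exact hD m hm0
    _ = C * D ^ k * m ^ k := by ring
    _ < a ^ m := hm

end PrimaryPartGrowth

section PrimaryOrder

lemma primaryOutside_units_val {M : Type*} [Monoid M] {S : Set ℕ} {u : Mˣ} :
    PrimaryOutside S (u : M) ↔ PrimaryOutside S u := by
  rw [PrimaryOutside, PrimaryOutside, Units.isOfFinOrder_val, orderOf_units]

lemma primaryOutside_pow_primaryPart_card {G : Type*} [Group G] [Finite G] (S : Finset ℕ) (x : G) :
    PrimaryOutside (S : Set ℕ) (x ^ primaryPart S (Nat.card G)) := by
  set n := Nat.card G with hn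
  have hn0 : n ≠ 0 := Nat.card_pos.ne'
  have horder : orderOf (x ^ primaryPart S n) ∣ n / primaryPart S n :=
    orderOf_dvd_of_pow_eq_one <| by
      rw [← pow_mul, Nat.mul_div_cancel' (primaryPart_dvd S hn0), hn, pow_card_eq_one']
  exact ⟨isOfFinOrder_of_finite _, fun ℓ hℓ hdvd hℓS ↦
    not_dvd_div_primaryPart S hn0 hℓ (mem_coe.1 hℓS) (hdvd.trans horder)⟩

variable {F : Type*} [Field F] [Fintype F]

lemma card_pow_three_lt_card_range_powMonoidHom_pow_four {N : ℕ} (hN : N ∣ Fintype.card F - 1)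
    (hNq : 16 * N ^ 4 < Fintype.card F) :
    Fintype.card F ^ 3 < Nat.card (powMonoidHom N : Fˣ →* Fˣ).range ^ 4 := by
  set q := Fintype.card F
  set h := Nat.card (powMonoidHom N : Fˣ →* Fˣ).range with hh
  have hq1 : 1 < q := Fintype.one_lt_card
  have hcard : N * h = q - 1 := by
    rw [hh, IsCyclic.card_powMonoidHom_range, Nat.card_units, Nat.card_eq_fintype_card,
      Nat.gcd_eq_right hN, Nat.mul_div_cancel' hN]
  have hq_le : q ≤ 2 * (N * h) := by lia
  have hh0 : 0 < h := Nat.card_pos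
  refine lt_of_mul_lt_mul_left (a := q) ?_ q.zero_le
  calc q * q ^ 3 = q ^ 4 := by ring
    _ ≤ (2 * (N * h)) ^ 4 := Nat.pow_le_pow_left hq_le 4
    _ = 16 * N ^ 4 * h ^ 4 := by ring
    _ < q * h ^ 4 := by gcongr

theorem exists_primaryOutside_eq_add_mul {S : Finset ℕ}
    (hS : 16 * primaryPart S (Fintype.card F - 1) ^ 4 < Fintype.card F)
    {c d : F} (hc : c ≠ 0) (hd : d ≠ 0) :
    ∃ a b : Fˣ, PrimaryOutside (S : Set ℕ) a ∧ PrimaryOutside (S : Set ℕ) b ∧ c = a + b * d := by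
  have hcard : Nat.card Fˣ = Fintype.card F - 1 := by
    rw [Nat.card_units, Nat.card_eq_fintype_card]
  rw [← hcard] at hS
  have hdvd : primaryPart S (Nat.card Fˣ) ∣ Fintype.card F - 1 :=
    hcard ▸ primaryPart_dvd S Nat.card_pos.ne'
  obtain ⟨_, ⟨u, rfl⟩, _, ⟨v, rfl⟩, h⟩ := exists_mem_subgroup_eq_add_mul
    (card_pow_three_lt_card_range_powMonoidHom_pow_four hdvd hS) hc hd
  exact ⟨_, _, primaryOutside_pow_primaryPart_card S u, primaryOutside_pow_primaryPart_card S v, h⟩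

end PrimaryOrder

/-- **Proposition 3.7 (ii), uniform finite-field form.** Let `p` be a prime and `S` a
finite set of primes. There is a constant `Q` such that for every finite field `F` of
characteristic `p` with `#F > Q` and all `c, d ∈ F^×`, one has `c = a + b·d` for some
`a, b ∈ F^×` of `S'`-primary order. -/
theorem prop_3_7_ii
    (p : ℕ) (hp : p.Prime) (S : Set ℕ) (hSfin : S.Finite)
    (hSprime : ∀ ℓ ∈ S, Nat.Prime ℓ) :
    ∃ Q : ℕ, ∀ (F : Type) [Field F] [Fintype F] [CharP F p],
      Q < Fintype.card F →
      ∀ c d : F, c ≠ 0 → d ≠ 0 →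
        ∃ a b : F, a ≠ 0 ∧ b ≠ 0 ∧ PrimaryOutside S a ∧ PrimaryOutside S b ∧
          c = a + b * d := by
  obtain ⟨M, hM⟩ :=
    eventually_atTop.1 (eventually_mul_primaryPart_pow_lt_pow hSfin.toFinset hp.one_lt 16 4)
  refine ⟨p ^ M, fun F _ _ _ hQ c d hc hd ↦ ?_⟩
  obtain ⟨m, -, hcard⟩ := FiniteField.card F p
  have hMm : M ≤ m := ((Nat.pow_lt_pow_iff_right hp.one_lt).1 (hcard ▸ hQ)).le
  obtain ⟨a, b, ha, hb, hab⟩ := exists_primaryOutside_eq_add_mul (hcard ▸ hM m hMm) hc hd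
  rw [hSfin.coe_toFinset, ← primaryOutside_units_val] at ha hb
  exact ⟨a, b, a.ne_zero, b.ne_zero, ha, hb, hab⟩
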